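/- arXiv:2508.07675 — 6 statements merged into one kernel-verified Lean document; each statement's English description precedes it below -/
import Mathlib

section
/- Let Q be a finite set of m queries, p : Q → [0,1], c : Q → [0,1], and d : Q × Q → [0,∞). The semantic-cache loss ℓ(M; p, c, d) = Σ_{q ∈ Q} p(q)·min{c(q), min_{u ∈ M} d(q,u)} is supermodular in M: for any A ⊆ B ⊆ Q and any q ∈ Q \ B, ℓ(A ∪ {q}; p, c, d) − ℓ(A; p, c, d) ≤ ℓ(B ∪ {q}; p, c, d) − ℓ(B; p, c, d). -/
/-- The semantic-cache loss: `ℓ(M; p, c, d) = Σ_{q ∈ Q} p(q) · min{c(q), min_{u ∈ M} d(q,u)}`,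
with the convention that the inner minimum over an empty cache `M` is `+∞`, so the
summand degenerates to `p(q) · c(q)`. -/
noncomputable def cacheLoss {Q : Type*} [Fintype Q] (p c : Q → ℝ) (d : Q → Q → ℝ)
    (M : Finset Q) : ℝ :=
  ∑ q : Q, p q * (if h : M.Nonempty then min (c q) (M.inf' h (fun u => d q u)) else c q)

/-- The summand of the loss at one query. -/
noncomputable def cacheTerm {Q : Type*} (a : ℝ) (f : Q → ℝ) (M : Finset Q) : ℝ :=
  if h : M.Nonempty then min a (M.inf' h f) else a

theorem cacheTerm_insert {Q : Type*} [DecidableEq Q] (a : ℝ) (f : Q → ℝ) (M : Finset Q) (q : Q) :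
    cacheTerm a f (insert q M) = min (cacheTerm a f M) (f q) := by
  unfold cacheTerm
  rw [dif_pos (Finset.insert_nonempty q M)]
  split_ifs with h
  · rw [Finset.inf'_insert h, min_comm (f q), min_assoc]
  · rw [Finset.not_nonempty_iff_eq_empty] at h
    subst h
    simp

theorem cacheTerm_anti {Q : Type*} (a : ℝ) (f : Q → ℝ) {A B : Finset Q} (hAB : A ⊆ B) :
    cacheTerm a f B ≤ cacheTerm a f A := by
  unfold cacheTerm
  by_cases hA : A.Nonempty
  · rw [dif_pos hA, dif_pos (hA.mono hAB)]
    exact min_le_min le_rfl (Finset.inf'_mono f hAB hA)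
  · rw [dif_neg hA]
    split_ifs
    · exact min_le_left _ _
    · exact le_rfl

/-- the semantic-cache loss is supermodular in the cache `M`:
for `A ⊆ B ⊆ Q` and `q ∉ B`,
`ℓ(A ∪ {q}) − ℓ(A) ≤ ℓ(B ∪ {q}) − ℓ(B)`. -/
theorem cacheLoss_supermodular {Q : Type*} [Fintype Q] [DecidableEq Q]
    (m : ℕ) (hm : Fintype.card Q = m)
    (p c : Q → ℝ) (d : Q → Q → ℝ)
    (hp : ∀ q, 0 ≤ p q ∧ p q ≤ 1) (hc : ∀ q, 0 ≤ c q ∧ c q ≤ 1)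
    (hd : ∀ q u, 0 ≤ d q u)
    (A B : Finset Q) (hAB : A ⊆ B) (q : Q) (hq : q ∉ B) :
    cacheLoss p c d (insert q A) - cacheLoss p c d A ≤
      cacheLoss p c d (insert q B) - cacheLoss p c d B := by
  have key : ∀ M, cacheLoss p c d M = ∑ x : Q, p x * cacheTerm (c x) (d x) M := fun _ => rfl
  simp only [key, ← Finset.sum_sub_distrib, ← mul_sub, cacheTerm_insert]
  refine Finset.sum_le_sum fun x _ => mul_le_mul_of_nonneg_left ?_ (hp x).1
  have h := cacheTerm_anti (c x) (d x) hAB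
  grind
end

section
/- Let Q be a finite set of m queries, p : Q → [0,1], c : Q → [0,1], d : Q × Q → [0,∞), and 1 ≤ k ≤ m. Write ℓ(M) = ℓ(M; p, c, d). Assume ℓ(∅) > ℓ({q}) for all q ∈ Q, and define the curvature κ = 1 − min_{q ∈ Q} (ℓ(Q \ {q}) − ℓ(Q)) / (ℓ(∅) − ℓ({q})); assume κ < 1 and set β = κ/(1−κ). Let M₀ = Q and, for i = 1,…,m−k, let M_i = M_{i−1} \ {q_i} where q_i ∈ argmin_{q ∈ M_{i−1}} ℓ(M_{i−1} \ {q}) (reverse greedy). Let M* be a minimizer of ℓ over subsets of Q of size at most k. Then the reverse-greedy output M = M_{m−k} satisfies ℓ(M) ≤ ((e^β − 1)/β) · ℓ(M*), with the convention (e^0−1)/0 = 1 when β = 0. -/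
theorem cl_if_insert {Q : Type*} [DecidableEq Q] (a : ℝ) (f : Q → ℝ) (x : Q) (S : Finset Q) :
    (if h : (insert x S).Nonempty then min a ((insert x S).inf' h f) else a) =
      min (if h : S.Nonempty then min a (S.inf' h f) else a) (f x) := by
  rw [dif_pos (Finset.insert_nonempty x S)]
  by_cases h : S.Nonempty
  · rw [dif_pos h, Finset.inf'_insert h, min_comm (f x), min_assoc]
  · rw [dif_neg h]
    rw [Finset.not_nonempty_iff_eq_empty] at h
    subst h
    simp

theorem cl_if_anti {Q : Type*} [DecidableEq Q] (a : ℝ) (f : Q → ℝ) {S T : Finset Q} (h : S ⊆ T) :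
    (if h : T.Nonempty then min a (T.inf' h f) else a) ≤
      (if h : S.Nonempty then min a (S.inf' h f) else a) := by
  by_cases hS : S.Nonempty
  · rw [dif_pos hS, dif_pos (hS.mono h)]
    exact min_le_min le_rfl (Finset.inf'_mono f h hS)
  · rw [dif_neg hS]
    split_ifs
    · exact min_le_left _ _
    · exact le_rfl

theorem cl_anti {Q : Type*} [Fintype Q] [DecidableEq Q] (p c : Q → ℝ) (d : Q → Q → ℝ)
    (hp : ∀ q, 0 ≤ p q) {S T : Finset Q} (h : S ⊆ T) :
    cacheLoss p c d T ≤ cacheLoss p c d S := by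
  unfold cacheLoss
  exact Finset.sum_le_sum fun q _ =>
    mul_le_mul_of_nonneg_left (cl_if_anti (c q) (fun u => d q u) h) (hp q)

theorem cl_super {Q : Type*} [Fintype Q] [DecidableEq Q] (p c : Q → ℝ) (d : Q → Q → ℝ)
    (hp : ∀ q, 0 ≤ p q) {S T : Finset Q} (h : S ⊆ T) (x : Q) :
    cacheLoss p c d T - cacheLoss p c d (insert x T) ≤
      cacheLoss p c d S - cacheLoss p c d (insert x S) := by
  unfold cacheLoss
  rw [← Finset.sum_sub_distrib, ← Finset.sum_sub_distrib]
  refine Finset.sum_le_sum fun q _ => ?_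
  rw [← mul_sub, ← mul_sub]
  refine mul_le_mul_of_nonneg_left ?_ (hp q)
  rw [cl_if_insert (c q) (fun u => d q u), cl_if_insert (c q) (fun u => d q u)]
  have := cl_if_anti (c q) (fun u => d q u) h
  generalize (if h : T.Nonempty then min (c q) (T.inf' h fun u => d q u) else c q) = b at *
  generalize (if h : S.Nonempty then min (c q) (S.inf' h fun u => d q u) else c q) = a at *
  rcases min_cases a (d q x) with h1 | h1 <;> rcases min_cases b (d q x) with h2 | h2 <;> linarith

theorem cl_nonneg {Q : Type*} [Fintype Q] (p c : Q → ℝ) (d : Q → Q → ℝ)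
    (hp : ∀ q, 0 ≤ p q) (hc : ∀ q, 0 ≤ c q) (hd : ∀ q u, 0 ≤ d q u) (S : Finset Q) :
    0 ≤ cacheLoss p c d S := by
  unfold cacheLoss
  refine Finset.sum_nonneg fun q _ => mul_nonneg (hp q) ?_
  split_ifs with h
  · exact le_min (hc q) (Finset.le_inf' _ _ fun u _ => hd q u)
  · exact hc q

/-- Supermodularity, summed: removing `D` from `A` costs at least the sum of single removals. -/
theorem cl_sum {Q : Type*} [Fintype Q] [DecidableEq Q] (p c : Q → ℝ) (d : Q → Q → ℝ)
    (hp : ∀ q, 0 ≤ p q) (A : Finset Q) (D : Finset Q) (hD : D ⊆ A) :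
    ∑ x ∈ D, (cacheLoss p c d (A \ {x}) - cacheLoss p c d A) ≤
      cacheLoss p c d (A \ D) - cacheLoss p c d A := by
  induction D using Finset.induction_on with
  | empty => simp
  | insert x D hx ih =>
    rw [Finset.sum_insert hx]
    have hxA : x ∈ A := hD (Finset.mem_insert_self x D)
    have ih' := ih (fun y hy => hD (Finset.mem_insert_of_mem hy))
    have hsub : A \ insert x D ⊆ A \ {x} := by
      intro y hy
      simp only [Finset.mem_sdiff, Finset.mem_insert, Finset.mem_singleton] at hy ⊢
      tauto
    have key := cl_super p c d hp hsub x
    have e1 : insert x (A \ {x}) = A := by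
      ext y
      simp only [Finset.mem_sdiff, Finset.mem_insert, Finset.mem_singleton]
      by_cases hy : y = x
      · simp [hy, hxA]
      · simp [hy]
    have e2 : insert x (A \ insert x D) = A \ D := by
      ext y
      simp only [Finset.mem_sdiff, Finset.mem_insert]
      by_cases hy : y = x
      · simp [hy, hxA, hx]
      · simp [hy]
    rw [e1, e2] at key
    linarith

theorem rg_real_hit {u b β R H δ : ℝ} (hR : 0 ≤ R) (hb : (R + 1) * b = β + R * u)
    (hu : 0 ≤ u) (huβ : u ≤ β) (hδ : 0 ≤ δ) (hH : (R + 1) * δ ≤ H) :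
    β * δ + (Real.exp u - 1) * (H - δ) ≤ (Real.exp b - 1) * H := by
  have hH0 : 0 ≤ H := le_trans (by positivity) hH
  have hub : u ≤ b := by
    by_contra hlt
    push Not at hlt
    nlinarith
  have e1 : Real.exp u ≤ Real.exp b := Real.exp_le_exp.mpr hub
  have e3 : Real.exp u * (1 + (b - u)) ≤ Real.exp b := by
    have h1 : Real.exp b = Real.exp u * Real.exp (b - u) := by
      rw [← Real.exp_add]; congr 1; ring
    rw [h1]
    refine mul_le_mul_of_nonneg_left ?_ (Real.exp_pos u).le
    have := Real.add_one_le_exp (b - u)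
    linarith
  have e4 : 1 + β ≤ Real.exp u * (1 + β - u) := by
    have h1 := Real.add_one_le_exp u
    have h2 : (u + 1) * (1 + β - u) ≤ Real.exp u * (1 + β - u) :=
      mul_le_mul_of_nonneg_right h1 (by linarith)
    nlinarith [mul_nonneg hu (sub_nonneg.mpr huβ)]
  have e2 : β + R * (Real.exp u - 1) ≤ (R + 1) * (Real.exp b - 1) := by
    have h1 := mul_le_mul_of_nonneg_left e3 (by linarith : (0 : ℝ) ≤ R + 1)
    have h2 : (R + 1) * (Real.exp u * (1 + (b - u))) = Real.exp u * ((R + 1) + (β - u)) := by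
      linear_combination Real.exp u * hb
    linarith
  by_cases hcase : β ≤ Real.exp u - 1
  · have h1 : β * δ ≤ (Real.exp u - 1) * δ := mul_le_mul_of_nonneg_right hcase hδ
    have h2 : (Real.exp u - 1) * H ≤ (Real.exp b - 1) * H :=
      mul_le_mul_of_nonneg_right (by linarith) hH0
    linarith
  · push Not at hcase
    have hR1 : 0 < R + 1 := by linarith
    refine le_of_mul_le_mul_left ?_ hR1
    have h1 := mul_le_mul_of_nonneg_left hH (sub_nonneg.mpr hcase.le)
    have h2 := mul_le_mul_of_nonneg_right e2 hH0
    linarith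

theorem rg_real_miss {β r t H δ : ℝ} (hβ : 0 < β) (hr : 0 < r) (ht : 0 ≤ t)
    (hδ : r * δ ≤ H) (hH0 : 0 ≤ H) :
    β * δ + (Real.exp (β * t / r) - 1) * (H + β * δ) ≤ (Real.exp (β * (t + 1) / r) - 1) * H := by
  have h1 : Real.exp (β * (t + 1) / r) = Real.exp (β * t / r) * Real.exp (β / r) := by
    rw [← Real.exp_add]; congr 1; ring
  have h2 : 1 + β / r ≤ Real.exp (β / r) := by
    have := Real.add_one_le_exp (β / r); linarith
  have h3 : δ ≤ H / r := by
    rw [le_div_iff₀ hr]; linarith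
  have hE := Real.exp_pos (β * t / r)
  rw [h1]
  have h4 : H + β * δ ≤ Real.exp (β / r) * H := by
    have a1 : β * δ ≤ β * (H / r) := mul_le_mul_of_nonneg_left h3 hβ.le
    have a2 := mul_le_mul_of_nonneg_right h2 hH0
    have a3 : β * (H / r) = β / r * H := by ring
    linarith
  have h5 := mul_le_mul_of_nonneg_left h4 hE.le
  linarith

theorem rg_main {Q : Type*} [Fintype Q] [DecidableEq Q]
    (p c : Q → ℝ) (d : Q → Q → ℝ) (hp : ∀ q, 0 ≤ p q) (β : ℝ) (hβ : 0 < β)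
    (hcurv : ∀ q, cacheLoss p c d (∅ : Finset Q) - cacheLoss p c d ({q} : Finset Q) ≤
      (1 + β) * (cacheLoss p c d (Finset.univ \ {q}) - cacheLoss p c d Finset.univ))
    (n : ℕ) (M : ℕ → Finset Q)
    (hstep : ∀ i, 1 ≤ i → i ≤ n → ∃ qi ∈ M (i - 1),
      (∀ q ∈ M (i - 1), cacheLoss p c d (M (i - 1) \ {qi}) ≤ cacheLoss p c d (M (i - 1) \ {q}))
        ∧ M i = M (i - 1) \ {qi})
    (Ms : Finset Q) :
    ∀ t i : ℕ, i + t = n → t ≤ (M i \ Ms).card →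
      β * (cacheLoss p c d (M n) - cacheLoss p c d (M i)) ≤
        (Real.exp (β * t / ((M i \ Ms).card : ℝ)) - 1) *
          (cacheLoss p c d (M i ∩ Ms) - cacheLoss p c d (M i)) := by
  intro t
  induction t with
  | zero =>
    intro i hi _
    have : i = n := by omega
    subst this
    simp
  | succ t ih =>
    intro i hi hcard
    obtain ⟨x, hxA, hmin, hMi⟩ := hstep (i + 1) (by omega) (by omega)
    simp only [Nat.add_sub_cancel] at hxA hmin hMi
    have ih' := ih (i + 1) (by omega)
    rw [hMi] at ih'
    generalize M i = A at *
    have hH0 : 0 ≤ cacheLoss p c d (A ∩ Ms) - cacheLoss p c d A :=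
      sub_nonneg.mpr (cl_anti p c d hp Finset.inter_subset_left)
    have hδ0 : 0 ≤ cacheLoss p c d (A \ {x}) - cacheLoss p c d A :=
      sub_nonneg.mpr (cl_anti p c d hp Finset.sdiff_subset)
    have hδ : ((A \ Ms).card : ℝ) * (cacheLoss p c d (A \ {x}) - cacheLoss p c d A) ≤
        cacheLoss p c d (A ∩ Ms) - cacheLoss p c d A := by
      have h1 := cl_sum p c d hp A (A \ Ms) Finset.sdiff_subset
      have h2 : A \ (A \ Ms) = A ∩ Ms := by
        ext y; simp only [Finset.mem_sdiff, Finset.mem_inter]; tauto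
      rw [h2] at h1
      refine le_trans ?_ h1
      rw [← nsmul_eq_mul]
      refine Finset.card_nsmul_le_sum _ _ _ fun y hy => ?_
      have := hmin y (Finset.mem_sdiff.mp hy).1
      linarith
    by_cases hx : x ∈ Ms
    · have e1 : (A \ {x}) \ Ms = A \ Ms := by
        ext y; simp only [Finset.mem_sdiff, Finset.mem_singleton]
        by_cases hy : y = x
        · simp [hy, hx]
        · simp [hy]
      rw [e1] at ih'
      have ih2 := ih' (by omega)
      have hr : (0 : ℝ) < ((A \ Ms).card : ℝ) := by
        have : 0 < (A \ Ms).card := by omega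
        exact_mod_cast this
      have key := rg_real_miss hβ hr (Nat.cast_nonneg t) hδ hH0
      have i1 : insert x ((A \ {x}) ∩ Ms) = A ∩ Ms := by
        ext y; simp only [Finset.mem_insert, Finset.mem_inter, Finset.mem_sdiff, Finset.mem_singleton]
        by_cases hy : y = x
        · simp [hy, hx, hxA]
        · simp [hy]
      have s1 := cl_super p c d hp (Finset.empty_subset ((A \ {x}) ∩ Ms)) x
      rw [i1, insert_empty_eq] at s1
      have s2 := cl_super p c d hp
        (Finset.sdiff_subset_sdiff (Finset.subset_univ A) (Finset.Subset.refl {x})) x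
      have i2 : ∀ B : Finset Q, x ∈ B → insert x (B \ {x}) = B := by
        intro B hB
        ext y; simp only [Finset.mem_insert, Finset.mem_sdiff, Finset.mem_singleton]
        by_cases hy : y = x
        · simp [hy, hB]
        · simp [hy]
      rw [i2 A hxA, i2 _ (Finset.mem_univ x)] at s2
      have s3 := hcurv x
      have s4 := mul_le_mul_of_nonneg_left s2 (by linarith : (0 : ℝ) ≤ 1 + β)
      have hE : 0 ≤ Real.exp (β * t / ((A \ Ms).card : ℝ)) - 1 := by
        have := Real.one_le_exp (x := β * t / ((A \ Ms).card : ℝ)) (by positivity)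
        linarith
      have s5 : cacheLoss p c d ((A \ {x}) ∩ Ms) - cacheLoss p c d (A \ {x}) ≤
          (cacheLoss p c d (A ∩ Ms) - cacheLoss p c d A) +
            β * (cacheLoss p c d (A \ {x}) - cacheLoss p c d A) := by linarith
      have s6 := mul_le_mul_of_nonneg_left s5 hE
      push_cast
      linarith
    · have e1 : (A \ {x}) \ Ms = (A \ Ms).erase x := by
        ext y; simp only [Finset.mem_sdiff, Finset.mem_singleton, Finset.mem_erase]; tauto
      have e2 : (A \ {x}) ∩ Ms = A ∩ Ms := by
        ext y; simp only [Finset.mem_sdiff, Finset.mem_singleton, Finset.mem_inter]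
        by_cases hy : y = x
        · simp [hy, hx]
        · simp [hy]
      have hxm : x ∈ A \ Ms := Finset.mem_sdiff.mpr ⟨hxA, hx⟩
      have e3 := Finset.card_erase_add_one hxm
      rw [e1, e2] at ih'
      rw [← e3] at hδ hcard ⊢
      have htR : t ≤ ((A \ Ms).erase x).card := by omega
      have ih2 := ih' htR
      generalize ((A \ Ms).erase x).card = R at *
      push_cast at hδ ⊢
      have hR0 : (0 : ℝ) ≤ R := Nat.cast_nonneg R
      have htR' : (t : ℝ) ≤ R := by exact_mod_cast htR
      have hu0 : 0 ≤ β * t / (R : ℝ) := by positivity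
      have key := rg_real_hit (u := β * t / (R : ℝ)) (b := β * (t + 1) / (R + 1)) (β := β)
        (R := R) (H := cacheLoss p c d (A ∩ Ms) - cacheLoss p c d A)
        (δ := cacheLoss p c d (A \ {x}) - cacheLoss p c d A) hR0
        (by
          rcases Nat.eq_zero_or_pos R with h0 | h0
          · subst h0
            have : t = 0 := by omega
            subst this
            simp
          · have : (0 : ℝ) < R := by exact_mod_cast h0
            field_simp
            ring)
        hu0
        (by
          rw [mul_div_assoc]
          exact mul_le_of_le_one_right hβ.le (div_le_one_of_le₀ htR' hR0))
        hδ0 hδ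
      have e5 : cacheLoss p c d (A ∩ Ms) - cacheLoss p c d (A \ {x}) =
        cacheLoss p c d (A ∩ Ms) - cacheLoss p c d A -
          (cacheLoss p c d (A \ {x}) - cacheLoss p c d A) := by ring
      rw [e5] at ih2
      linarith

/-- Approximation guarantee of reverse greedy: starting from `M₀ = Q` and
iteratively removing the element whose removal yields the smallest loss until `k` elements
remain, the resulting cache `M_{m−k}` satisfies
`ℓ(M_{m−k}) ≤ ((e^β − 1)/β) · ℓ(M*)`, where `β = κ/(1−κ)`, `κ` is the curvature
`1 − min_q (ℓ(Q\{q}) − ℓ(Q))/(ℓ(∅) − ℓ({q}))`, and `M*` is an optimal cache of size ≤ k.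
The convention `(e^0−1)/0 = 1` for `β = 0` is encoded by the `if`. -/
theorem reverse_greedy_approx {Q : Type*} [Fintype Q] [DecidableEq Q] [Nonempty Q]
    (m k : ℕ) (hm : Fintype.card Q = m) (hk1 : 1 ≤ k) (hkm : k ≤ m)
    (p c : Q → ℝ) (d : Q → Q → ℝ)
    (hp : ∀ q, 0 ≤ p q ∧ p q ≤ 1) (hc : ∀ q, 0 ≤ c q ∧ c q ≤ 1)
    (hd : ∀ q u, 0 ≤ d q u)
    (hgap : ∀ q : Q, cacheLoss p c d ({q} : Finset Q) < cacheLoss p c d (∅ : Finset Q))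
    (κ β : ℝ)
    (hκ : κ = 1 - Finset.univ.inf' Finset.univ_nonempty (fun q : Q =>
      (cacheLoss p c d (Finset.univ \ {q}) - cacheLoss p c d Finset.univ) /
        (cacheLoss p c d (∅ : Finset Q) - cacheLoss p c d ({q} : Finset Q))))
    (hκ0 : 0 ≤ κ) (hκ1 : κ < 1) (hβ : β = κ / (1 - κ))
    (M : ℕ → Finset Q) (hM0 : M 0 = Finset.univ)
    (hstep : ∀ i, 1 ≤ i → i ≤ m - k → ∃ qi ∈ M (i - 1),
      (∀ q ∈ M (i - 1), cacheLoss p c d (M (i - 1) \ {qi}) ≤ cacheLoss p c d (M (i - 1) \ {q}))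
        ∧ M i = M (i - 1) \ {qi})
    (Mstar : Finset Q) (hMstar_card : Mstar.card ≤ k)
    (hMstar_opt : ∀ S : Finset Q, S.card ≤ k → cacheLoss p c d Mstar ≤ cacheLoss p c d S) :
    cacheLoss p c d (M (m - k)) ≤
      (if β = 0 then 1 else (Real.exp β - 1) / β) * cacheLoss p c d Mstar := by
  have hp0 : ∀ q, 0 ≤ p q := fun q => (hp q).1
  have hκpos : 0 < 1 - κ := by linarith
  have hβ0 : 0 ≤ β := by rw [hβ]; positivity
  have h1β : (1 + β) * (1 - κ) = 1 := by
    rw [hβ]; field_simp; ring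
  have hcurv0 : ∀ q, cacheLoss p c d (∅ : Finset Q) - cacheLoss p c d ({q} : Finset Q) ≤
      (1 + β) * (cacheLoss p c d (Finset.univ \ {q}) - cacheLoss p c d Finset.univ) := by
    intro q
    have h1 : 1 - κ ≤ (cacheLoss p c d (Finset.univ \ {q}) - cacheLoss p c d Finset.univ) /
        (cacheLoss p c d (∅ : Finset Q) - cacheLoss p c d ({q} : Finset Q)) := by
      rw [hκ, sub_sub_cancel]
      exact Finset.inf'_le _ (Finset.mem_univ q)
    rw [le_div_iff₀ (sub_pos.mpr (hgap q))] at h1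
    have h2 := mul_le_mul_of_nonneg_left h1 (by linarith : (0 : ℝ) ≤ 1 + β)
    rw [← mul_assoc, h1β, one_mul] at h2
    exact h2
  have hU0 : 0 ≤ cacheLoss p c d Finset.univ :=
    cl_nonneg p c d hp0 (fun q => (hc q).1) hd _
  have hUs : cacheLoss p c d Finset.univ ≤ cacheLoss p c d Mstar :=
    cl_anti p c d hp0 (Finset.subset_univ _)
  have hcard : m - k ≤ (Finset.univ \ Mstar).card := by
    rw [Finset.card_sdiff_of_subset (Finset.subset_univ _), Finset.card_univ, hm]
    omega
  have main : ∀ b : ℝ, 0 < b → β ≤ b →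
      b * cacheLoss p c d (M (m - k)) ≤ (Real.exp b - 1) * cacheLoss p c d Mstar := by
    intro b hb hβb
    have hcurv : ∀ q, cacheLoss p c d (∅ : Finset Q) - cacheLoss p c d ({q} : Finset Q) ≤
        (1 + b) * (cacheLoss p c d (Finset.univ \ {q}) - cacheLoss p c d Finset.univ) := by
      intro q
      refine (hcurv0 q).trans (mul_le_mul_of_nonneg_right (by linarith) ?_)
      exact sub_nonneg.mpr (cl_anti p c d hp0 (Finset.subset_univ _))
    have h1 := rg_main p c d hp0 b hb hcurv (m - k) M hstep Mstar (m - k) 0 (by omega)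
      (by rw [hM0]; exact hcard)
    rw [hM0, Finset.univ_inter] at h1
    have h2 : Real.exp (b * ((m - k : ℕ) : ℝ) / ((Finset.univ \ Mstar).card : ℝ)) ≤ Real.exp b := by
      refine Real.exp_le_exp.mpr ?_
      rw [mul_div_assoc]
      refine mul_le_of_le_one_right hb.le (div_le_one_of_le₀ ?_ (Nat.cast_nonneg _))
      exact_mod_cast hcard
    have h3 := mul_le_mul_of_nonneg_right (sub_le_sub_right h2 1) (sub_nonneg.mpr hUs)
    have h4 : b ≤ Real.exp b - 1 := by
      have := Real.add_one_le_exp b; linarith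
    have h5 := mul_le_mul_of_nonneg_right h4 hU0
    linarith
  split_ifs with h0
  · rw [one_mul]
    have hS0 : 0 ≤ cacheLoss p c d Mstar := le_trans hU0 hUs
    have hb : ∀ b : ℝ, 0 < b →
        cacheLoss p c d (M (m - k)) ≤ Real.exp b * cacheLoss p c d Mstar := by
      intro b hb
      have h1 := main b hb (by linarith)
      have h2 : Real.exp b - 1 ≤ b * Real.exp b := by
        have a1 := Real.add_one_le_exp (-b)
        have a2 := mul_le_mul_of_nonneg_right a1 (Real.exp_pos b).le
        rw [← Real.exp_add, neg_add_cancel, Real.exp_zero] at a2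
        linarith
      have h3 := mul_le_mul_of_nonneg_right h2 hS0
      refine le_of_mul_le_mul_left ?_ hb
      linarith
    have hcont : Continuous fun b : ℝ => Real.exp b * cacheLoss p c d Mstar := by fun_prop
    have ht : Filter.Tendsto (fun b : ℝ => Real.exp b * cacheLoss p c d Mstar)
        (nhdsWithin 0 (Set.Ioi 0)) (nhds (Real.exp 0 * cacheLoss p c d Mstar)) :=
      (hcont.tendsto 0).mono_left nhdsWithin_le_nhds
    rw [Real.exp_zero, one_mul] at ht
    refine ge_of_tendsto ht ?_
    filter_upwards [self_mem_nhdsWithin] with b hb'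
    exact hb b hb'
  · have hβp : 0 < β := lt_of_le_of_ne hβ0 (Ne.symm h0)
    have h1 := main β hβp le_rfl
    rw [div_mul_eq_mul_div, le_div_iff₀ hβp]
    linarith
end

section
/- Let Q be a finite set of m queries, d : Q × Q → [0,1], k ≤ m, and α ≥ 1. Let p, p̂ : Q → [0,1] and c, c̄ : Q → [0,1] with c(q) ≤ c̄(q) for all q ∈ Q. Let M* be a minimizer of ℓ(·; p, c, d) over subsets of Q with at most k elements, and suppose M̂ ⊆ Q with |M̂| ≤ k satisfies ℓ(M̂; p̂, c̄, d) ≤ α · ℓ(M; p̂, c̄, d) for every M ⊆ Q with |M| ≤ k. Then ℓ(M̂; p, c, d) − α·ℓ(M*; p, c, d) ≤ α·Σ_{q ∈ Q} p(q)·(c̄(q) − c(q)) + (1 + α)·Σ_{q ∈ Q} |p̂(q) − p(q)|. -/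
/-- Offline suboptimality decomposition: if `M*` minimizes the true loss
over caches of size ≤ k, `c ≤ c̄` pointwise, and `M̂` is an `α`-approximate minimizer of
the estimated loss `ℓ(·; p̂, c̄, d)` over caches of size ≤ k, then
`ℓ(M̂; p, c, d) − α·ℓ(M*; p, c, d)
  ≤ α·Σ_q p(q)(c̄(q) − c(q)) + (1+α)·Σ_q |p̂(q) − p(q)|`. -/
theorem offline_subopt_decomposition {Q : Type*} [Fintype Q]
    (m k : ℕ) (hm : Fintype.card Q = m) (hkm : k ≤ m)
    (α : ℝ) (hα : 1 ≤ α)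
    (p phat c cbar : Q → ℝ) (d : Q → Q → ℝ)
    (hp : ∀ q, 0 ≤ p q ∧ p q ≤ 1) (hphat : ∀ q, 0 ≤ phat q ∧ phat q ≤ 1)
    (hc : ∀ q, 0 ≤ c q ∧ c q ≤ 1) (hcbar : ∀ q, 0 ≤ cbar q ∧ cbar q ≤ 1)
    (hle : ∀ q, c q ≤ cbar q)
    (hd : ∀ q u, 0 ≤ d q u ∧ d q u ≤ 1)
    (Mstar : Finset Q) (hMstar_card : Mstar.card ≤ k)
    (hMstar_opt : ∀ M : Finset Q, M.card ≤ k →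
      cacheLoss p c d Mstar ≤ cacheLoss p c d M)
    (Mhat : Finset Q) (hMhat_card : Mhat.card ≤ k)
    (hMhat_approx : ∀ M : Finset Q, M.card ≤ k →
      cacheLoss phat cbar d Mhat ≤ α * cacheLoss phat cbar d M) :
    cacheLoss p c d Mhat - α * cacheLoss p c d Mstar ≤
      α * (∑ q : Q, p q * (cbar q - c q)) + (1 + α) * ∑ q : Q, |phat q - p q| := by
  have hg : ∀ (M : Finset Q) (q : Q),
      let g := fun c : Q → ℝ =>
        (if h : M.Nonempty then min (c q) (M.inf' h (fun u => d q u)) else c q)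
      0 ≤ g cbar ∧ g cbar ≤ 1 ∧ g c ≤ g cbar ∧ g cbar ≤ g c + (cbar q - c q) := by
    intro M q
    have h1 := hle q
    have h2 := hcbar q
    by_cases h : M.Nonempty
    · have h3 : 0 ≤ M.inf' h (fun u => d q u) :=
        Finset.le_inf' h _ (fun u _ => (hd q u).1)
      simp only [h, dite_true]
      refine ⟨le_min h2.1 h3, (min_le_left _ _).trans h2.2, min_le_min_right _ h1, ?_⟩
      rcases le_total (c q) (M.inf' h (fun u => d q u)) with h4 | h4
      · rw [min_eq_left h4]
        linarith [min_le_left (cbar q) (M.inf' h (fun u => d q u))]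
      · rw [min_eq_right h4]
        linarith [min_le_right (cbar q) (M.inf' h (fun u => d q u))]
    · simp only [h, dite_false]
      exact ⟨h2.1, h2.2, h1, by linarith⟩
  have hA : cacheLoss p c d Mhat ≤ cacheLoss phat cbar d Mhat + ∑ q : Q, |phat q - p q| := by
    unfold cacheLoss
    rw [← Finset.sum_add_distrib]
    refine Finset.sum_le_sum fun q _ => ?_
    obtain ⟨h0, h1, h2, -⟩ := hg Mhat q
    have h3 := mul_le_mul_of_nonneg_left h2 (hp q).1
    have h4 := mul_le_mul_of_nonneg_right (neg_abs_le (phat q - p q)) h0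
    have h5 := mul_le_mul_of_nonneg_left h1 (abs_nonneg (phat q - p q))
    linarith
  have hB : cacheLoss phat cbar d Mstar ≤ cacheLoss p c d Mstar
      + ∑ q : Q, p q * (cbar q - c q) + ∑ q : Q, |phat q - p q| := by
    unfold cacheLoss
    rw [← Finset.sum_add_distrib, ← Finset.sum_add_distrib]
    refine Finset.sum_le_sum fun q _ => ?_
    obtain ⟨h0, h1, -, h2⟩ := hg Mstar q
    have h3 := mul_le_mul_of_nonneg_left h2 (hp q).1
    have h4 := mul_le_mul_of_nonneg_right (le_abs_self (phat q - p q)) h0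
    have h5 := mul_le_mul_of_nonneg_left h1 (abs_nonneg (phat q - p q))
    linarith
  have hC := hMhat_approx Mstar hMstar_card
  have hD := mul_le_mul_of_nonneg_left hB (by linarith : (0 : ℝ) ≤ α)
  linarith
end

section
/- Let K ≥ 1 be a real number and let a : ℕ → ℝ be a sequence such that for every τ with 1 ≤ τ ≤ n, a(τ) ≥ 1 + √(K · Σ_{τ'=1}^{τ−1} a(τ')). Then a(n) ≥ K^{1 − 2^{1−n}}. -/
/-- Stage-size growth of the stage-based switching scheme: if `K ≥ 1` and
the stage sizes satisfy `a(τ) ≥ 1 + √(K·Σ_{τ'=1}^{τ−1} a(τ'))` for all `1 ≤ τ ≤ n`, then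
`a(n) ≥ K^{1 − 2^{1−n}}`. -/
theorem stage_size_growth (K : ℝ) (hK : 1 ≤ K) (a : ℕ → ℝ) (n : ℕ) (hn : 1 ≤ n)
    (h : ∀ τ, 1 ≤ τ → τ ≤ n →
      1 + Real.sqrt (K * ∑ τ' ∈ Finset.Icc 1 (τ - 1), a τ') ≤ a τ) :
    K ^ ((1 : ℝ) - 2 ^ (1 - (n : ℝ))) ≤ a n := by
  induction n, hn using Nat.le_induction with
  | base =>
    have h1 := h 1 le_rfl le_rfl
    simpa using h1
  | succ n hn ih =>
    have ih := ih (fun τ h1 h2 => h τ h1 (by omega))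
    have h1 := h (n + 1) (by omega) le_rfl
    have hK0 : 0 < K := by linarith
    have hs : a n ≤ ∑ τ' ∈ Finset.Icc 1 (n + 1 - 1), a τ' := by
      rw [Nat.add_sub_cancel]
      apply Finset.single_le_sum (f := a) (fun i hi => ?_) (Finset.mem_Icc.mpr ⟨hn, le_rfl⟩)
      rw [Finset.mem_Icc] at hi
      have h3 := h i hi.1 (by omega)
      have h4 := Real.sqrt_nonneg (K * ∑ τ' ∈ Finset.Icc 1 (i - 1), a τ')
      linarith
    have h2 : K ^ ((1 : ℝ) - 2 ^ (1 - ((n + 1 : ℕ) : ℝ)))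
        ≤ Real.sqrt (K * ∑ τ' ∈ Finset.Icc 1 (n + 1 - 1), a τ') := by
      apply Real.le_sqrt_of_sq_le
      have h5 : (K ^ ((1 : ℝ) - 2 ^ (1 - ((n + 1 : ℕ) : ℝ)))) ^ 2
          = K * K ^ ((1 : ℝ) - 2 ^ (1 - (n : ℝ))) := by
        have h6 : (2 : ℝ) ^ (1 - (n : ℝ)) = 2 * 2 ^ (1 - ((n + 1 : ℕ) : ℝ)) := by
          have h7 : 1 - (n : ℝ) = 1 + (1 - ((n + 1 : ℕ) : ℝ)) := by
            push_cast
            ring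
          rw [h7, Real.rpow_add (by norm_num), Real.rpow_one]
        rw [pow_two, ← Real.rpow_add hK0, h6]
        nth_rewrite 2 [← Real.rpow_one K]
        rw [← Real.rpow_add hK0]
        congr 1
        ring
      rw [h5]
      exact mul_le_mul_of_nonneg_left (ih.trans hs) hK0.le
    linarith
end

section
/- Let m ≥ 1 and T be positive integers with T/m ≥ e^e, and set s₀ = log log(T/m). Suppose for each q in a finite index set Q of size m there is a finite sequence of positive integers a(q,1), …, a(q,n_q) (stage sizes) such that for every non-final stage τ < n_q one has a(q,τ) ≥ 1 + √(T · Σ_{τ'=1}^{τ−1} a(q,τ') / m), and suppose the total number of observations satisfies Σ_{q ∈ Q} Σ_{τ=1}^{n_q} a(q,τ) ≤ T. Then the total number of stages satisfies Σ_{q ∈ Q} n_q ≤ m·(2·s₀ + e + 3). -/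
lemma stage_lower (x : ℝ) (hx : 0 < x) (n : ℕ) (a : ℕ → ℕ)
    (hstage : ∀ τ, 1 ≤ τ → τ < n →
      1 + Real.sqrt (x * (∑ τ' ∈ Finset.Icc 1 (τ - 1), (a τ' : ℝ))) ≤ (a τ : ℝ)) (j : ℕ) :
    j + 1 < n → x * Real.exp (-(Real.log x) / 2 ^ j) ≤ (a (j + 1) : ℝ) := by
  induction j with
  | zero =>
    intro hj
    have h := hstage 1 le_rfl hj
    have h1 : x * Real.exp (-(Real.log x) / 2 ^ 0) = 1 := by
      rw [pow_zero, div_one, Real.exp_neg, Real.exp_log hx, mul_inv_cancel₀ hx.ne']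
    rw [h1]
    have := Real.sqrt_nonneg (x * (∑ τ' ∈ Finset.Icc 1 (1 - 1), (a τ' : ℝ)))
    simpa using (by linarith : (1 : ℝ) ≤ a 1)
  | succ j ih =>
    intro hj
    have h := hstage (j + 1 + 1) (by omega) hj
    have ih' := ih (by omega)
    have hS : (a (j + 1) : ℝ) ≤ ∑ τ' ∈ Finset.Icc 1 (j + 1 + 1 - 1), (a τ' : ℝ) :=
      Finset.single_le_sum (f := fun i => (a i : ℝ)) (fun i _ => Nat.cast_nonneg _)
        (by simp)
    have h2 : x * Real.exp (-(Real.log x) / 2 ^ (j + 1)) ≤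
        Real.sqrt (x * (∑ τ' ∈ Finset.Icc 1 (j + 1 + 1 - 1), (a τ' : ℝ))) := by
      apply Real.le_sqrt_of_sq_le
      have he : Real.exp (-(Real.log x) / 2 ^ (j + 1)) ^ 2 = Real.exp (-(Real.log x) / 2 ^ j) := by
        rw [← Real.exp_nat_mul]
        congr 1
        rw [pow_succ]
        field_simp
        push_cast
        ring
      rw [mul_pow, he, sq, mul_assoc]
      exact mul_le_mul_of_nonneg_left (ih'.trans hS) hx.le
    linarith

lemma query_bound (x : ℝ) (hx : 0 < x) (n K : ℕ) (a : ℕ → ℕ)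
    (hK : Real.log x ≤ 2 ^ K)
    (hstage : ∀ τ, 1 ≤ τ → τ < n →
      1 + Real.sqrt (x * (∑ τ' ∈ Finset.Icc 1 (τ - 1), (a τ' : ℝ))) ≤ (a τ : ℝ)) :
    ((n : ℝ) - (K + 1)) * (x * Real.exp (-1)) ≤ ∑ τ ∈ Finset.Icc 1 n, (a τ : ℝ) := by
  have hp : 0 < x * Real.exp (-1) := by positivity
  have h1 : ∑ τ ∈ Finset.Icc (K + 1) (n - 1), (a τ : ℝ) ≤ ∑ τ ∈ Finset.Icc 1 n, (a τ : ℝ) := by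
    apply Finset.sum_le_sum_of_subset_of_nonneg
    · intro i hi
      rw [Finset.mem_Icc] at *
      omega
    · intros
      positivity
  have h2 : (Finset.Icc (K + 1) (n - 1)).card • (x * Real.exp (-1)) ≤
      ∑ τ ∈ Finset.Icc (K + 1) (n - 1), (a τ : ℝ) := by
    apply Finset.card_nsmul_le_sum
    intro i hi
    rw [Finset.mem_Icc] at hi
    obtain ⟨j, rfl⟩ : ∃ j, i = j + 1 := ⟨i - 1, by omega⟩
    refine le_trans ?_ (stage_lower x hx n a hstage j (by omega))
    apply mul_le_mul_of_nonneg_left _ hx.le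
    apply Real.exp_le_exp.mpr
    rw [le_div_iff₀ (by positivity)]
    have : (2 : ℝ) ^ K ≤ 2 ^ j := pow_le_pow_right₀ (by norm_num) (by omega)
    linarith
  rw [Nat.card_Icc, nsmul_eq_mul] at h2
  refine le_trans (mul_le_mul_of_nonneg_right ?_ hp.le) (h2.trans h1)
  have : n ≤ (n - 1 + 1 - (K + 1)) + (K + 1) := by omega
  have h3 : (n : ℝ) ≤ ((n - 1 + 1 - (K + 1) : ℕ) : ℝ) + (K + 1) := by exact_mod_cast this
  linarith

/-- Deterministic core of the switch-count bound for CLCB-SC-LS: with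
`T/m ≥ e^e` and `s₀ = log log(T/m)`, if for each query `q` the stage sizes
`a(q,1), …, a(q,n_q)` are positive integers satisfying, for every non-final stage `τ < n_q`,
`a(q,τ) ≥ 1 + √(T·Σ_{τ'<τ} a(q,τ')/m)`, and the total number of observations is at most `T`,
then the total number of stages satisfies `Σ_q n_q ≤ m·(2·s₀ + e + 3)`. -/
theorem switch_count_bound {Q : Type*} [Fintype Q]
    (m T : ℕ) (hm : 1 ≤ m) (hT : 0 < T) (hcard : Fintype.card Q = m)
    (hTm : Real.exp (Real.exp 1) ≤ (T : ℝ) / (m : ℝ))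
    (s₀ : ℝ) (hs₀ : s₀ = Real.log (Real.log ((T : ℝ) / (m : ℝ))))
    (n : Q → ℕ) (a : Q → ℕ → ℕ)
    (hpos : ∀ q, ∀ τ, 1 ≤ τ → τ ≤ n q → 0 < a q τ)
    (hstage : ∀ q, ∀ τ, 1 ≤ τ → τ < n q →
      1 + Real.sqrt ((T : ℝ) * (∑ τ' ∈ Finset.Icc 1 (τ - 1), (a q τ' : ℝ)) / (m : ℝ)) ≤
        (a q τ : ℝ))
    (htotal : ∑ q : Q, ∑ τ ∈ Finset.Icc 1 (n q), a q τ ≤ T) :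
    (∑ q : Q, (n q : ℝ)) ≤ (m : ℝ) * (2 * s₀ + Real.exp 1 + 3) := by
  have hm0 : (0 : ℝ) < m := by exact_mod_cast hm
  set x : ℝ := (T : ℝ) / m with hxdef
  have hx : 0 < x := lt_of_lt_of_le (Real.exp_pos _) hTm
  have hL : Real.exp 1 ≤ Real.log x := (Real.le_log_iff_exp_le hx).mpr hTm
  have hL0 : 0 < Real.log x := lt_of_lt_of_le (Real.exp_pos _) hL
  have hs1 : 1 ≤ s₀ := by
    rw [hs₀]
    exact (Real.le_log_iff_exp_le hL0).mpr hL
  set K := ⌈2 * s₀⌉₊ with hKdef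
  have hK1 : (K : ℝ) < 2 * s₀ + 1 := Nat.ceil_lt_add_one (by linarith)
  have hK2 : 2 * s₀ ≤ K := Nat.le_ceil _
  have hK : Real.log x ≤ 2 ^ K := by
    rw [← Real.log_le_log_iff hL0 (by positivity), Real.log_pow, ← hs₀]
    have := Real.log_two_gt_d9
    have : (K : ℝ) * (1 / 2) ≤ K * Real.log 2 :=
      mul_le_mul_of_nonneg_left (by linarith) (Nat.cast_nonneg _)
    linarith
  have hq : ∀ q, ((n q : ℝ) - (K + 1)) * (x * Real.exp (-1)) ≤
      ∑ τ ∈ Finset.Icc 1 (n q), (a q τ : ℝ) := by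
    intro q
    apply query_bound x hx (n q) K (a q) hK
    intro τ h1 h2
    have h := hstage q τ h1 h2
    rwa [mul_div_right_comm] at h
  have hsum := Finset.sum_le_sum (fun q (_ : q ∈ Finset.univ) => hq q)
  have htot : ∑ q : Q, ∑ τ ∈ Finset.Icc 1 (n q), (a q τ : ℝ) ≤ T := by exact_mod_cast htotal
  rw [← Finset.sum_mul, Finset.sum_sub_distrib, Finset.sum_const, Finset.card_univ, hcard,
    nsmul_eq_mul] at hsum
  have hTx : (T : ℝ) = m * Real.exp 1 * (x * Real.exp (-1)) := by
    have : Real.exp 1 * Real.exp (-1) = 1 := by rw [← Real.exp_add]; simp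
    calc (T : ℝ) = m * x := by rw [hxdef]; field_simp
      _ = m * x * (Real.exp 1 * Real.exp (-1)) := by rw [this, mul_one]
      _ = _ := by ring
  have hfin := le_of_mul_le_mul_right (hsum.trans (htot.trans hTx.le))
    (by positivity : 0 < x * Real.exp (-1))
  have := mul_le_mul_of_nonneg_left hK1.le hm0.le
  nlinarith
end

section
/- Let Q be a finite set of m queries, d : Q × Q → [0,1], k ≤ m, and α ≥ 1. Let p, p̂ : Q → [0,1] and c, c̲ : Q → [0,1] with c̲(q) ≤ c(q) for all q ∈ Q. Let M* be a minimizer of ℓ(·; p, c, d) over subsets of Q with at most k elements, and suppose M ⊆ Q with |M| ≤ k satisfies ℓ(M; p̂, c̲, d) ≤ α · ℓ(M'; p̂, c̲, d) for every M' ⊆ Q with |M'| ≤ k. Then ℓ(M; p, c, d) − α·ℓ(M*; p, c, d) ≤ Σ_{q ∈ Q : c̲(q) ≤ min_{u ∈ M} d(q,u)} p(q)·(c(q) − c̲(q)) + (1 + α)·Σ_{q ∈ Q} |p̂(q) − p(q)|. -/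
/-- The per-query service cost. -/
noncomputable def qCost {Q : Type*} (c : Q → ℝ) (d : Q → Q → ℝ) (M : Finset Q) (q : Q) : ℝ :=
  if h : M.Nonempty then min (c q) (M.inf' h (fun u => d q u)) else c q

theorem cacheLoss_eq {Q : Type*} [Fintype Q] (p c : Q → ℝ) (d : Q → Q → ℝ) (M : Finset Q) :
    cacheLoss p c d M = ∑ q : Q, p q * qCost c d M q := rfl

theorem qCost_le {Q : Type*} (c : Q → ℝ) (d : Q → Q → ℝ) (M : Finset Q) (q : Q) :
    qCost c d M q ≤ c q := by
  unfold qCost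
  split_ifs
  · exact min_le_left _ _
  · exact le_rfl

theorem qCost_nonneg {Q : Type*} (c : Q → ℝ) (d : Q → Q → ℝ) (M : Finset Q) (q : Q)
    (hc : 0 ≤ c q) (hd : ∀ u, 0 ≤ d q u) : 0 ≤ qCost c d M q := by
  unfold qCost
  split_ifs with h
  · exact le_min hc (Finset.le_inf' h _ (fun u _ => hd u))
  · exact hc

theorem qCost_mono {Q : Type*} (c c' : Q → ℝ) (d : Q → Q → ℝ) (M : Finset Q) (q : Q)
    (h : c q ≤ c' q) : qCost c d M q ≤ qCost c' d M q := by
  unfold qCost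
  split_ifs
  · exact min_le_min_right _ h
  · exact h

theorem qCost_hit {Q : Type*} (c : Q → ℝ) (d : Q → Q → ℝ) (M : Finset Q) (q : Q)
    (h : ∀ u ∈ M, c q ≤ d q u) : qCost c d M q = c q := by
  unfold qCost
  split_ifs with hM
  · exact min_eq_left (Finset.le_inf' hM _ h)
  · rfl

theorem qCost_miss {Q : Type*} (c c' : Q → ℝ) (d : Q → Q → ℝ) (M : Finset Q) (q : Q)
    (h : ¬ ∀ u ∈ M, c q ≤ d q u) : qCost c' d M q ≤ qCost c d M q := by
  push Not at h
  obtain ⟨u, hu, hlt⟩ := h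
  have hM : M.Nonempty := ⟨u, hu⟩
  have h1 : M.inf' hM (fun u => d q u) ≤ d q u := Finset.inf'_le (fun u => d q u) hu
  unfold qCost
  rw [dif_pos hM, dif_pos hM, min_eq_right (h1.trans hlt.le)]
  exact min_le_right _ _

theorem loss_shift {Q : Type*} [Fintype Q] (p p' c : Q → ℝ) (d : Q → Q → ℝ) (M : Finset Q)
    (hc : ∀ q, 0 ≤ c q ∧ c q ≤ 1) (hd : ∀ q u, 0 ≤ d q u) :
    cacheLoss p c d M ≤ cacheLoss p' c d M + ∑ q : Q, |p' q - p q| := by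
  rw [cacheLoss_eq, cacheLoss_eq, ← Finset.sum_add_distrib]
  refine Finset.sum_le_sum fun q _ => ?_
  have h0 := qCost_nonneg c d M q (hc q).1 (hd q)
  have h1 := (qCost_le c d M q).trans (hc q).2
  have h2 := neg_abs_le (p' q - p q)
  have h3 := abs_nonneg (p' q - p q)
  nlinarith [mul_nonneg h0 (by linarith : 0 ≤ (p' q - p q) + |p' q - p q|),
    mul_nonneg (sub_nonneg.2 h1) h3]

open Classical in
/-- Per-round regret decomposition for CLCB-SC-LS: if `M*` minimizes the
true loss over caches of size ≤ k, `c̲ ≤ c` pointwise (optimistic LCB estimates), and `M`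
is an `α`-approximate minimizer of the estimated loss `ℓ(·; p̂, c̲, d)` over caches of
size ≤ k, then
`ℓ(M; p, c, d) − α·ℓ(M*; p, c, d)
  ≤ Σ_{q : c̲(q) ≤ min_{u ∈ M} d(q,u)} p(q)(c(q) − c̲(q)) + (1+α)·Σ_q |p̂(q) − p(q)|`,
where the condition `c̲(q) ≤ min_{u ∈ M} d(q,u)` is expressed as `∀ u ∈ M, c̲(q) ≤ d(q,u)`
(vacuously true for `M = ∅`, matching the `+∞` convention). -/
theorem online_regret_decomposition {Q : Type*} [Fintype Q]
    (m k : ℕ) (hm : Fintype.card Q = m) (hkm : k ≤ m)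
    (α : ℝ) (hα : 1 ≤ α)
    (p phat c clow : Q → ℝ) (d : Q → Q → ℝ)
    (hp : ∀ q, 0 ≤ p q ∧ p q ≤ 1) (hphat : ∀ q, 0 ≤ phat q ∧ phat q ≤ 1)
    (hc : ∀ q, 0 ≤ c q ∧ c q ≤ 1) (hclow : ∀ q, 0 ≤ clow q ∧ clow q ≤ 1)
    (hle : ∀ q, clow q ≤ c q)
    (hd : ∀ q u, 0 ≤ d q u ∧ d q u ≤ 1)
    (Mstar : Finset Q) (hMstar_card : Mstar.card ≤ k)
    (hMstar_opt : ∀ M' : Finset Q, M'.card ≤ k →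
      cacheLoss p c d Mstar ≤ cacheLoss p c d M')
    (M : Finset Q) (hM_card : M.card ≤ k)
    (hM_approx : ∀ M' : Finset Q, M'.card ≤ k →
      cacheLoss phat clow d M ≤ α * cacheLoss phat clow d M') :
    cacheLoss p c d M - α * cacheLoss p c d Mstar ≤
      (∑ q ∈ Finset.univ.filter (fun q => ∀ u ∈ M, clow q ≤ d q u),
        p q * (c q - clow q)) + (1 + α) * ∑ q : Q, |phat q - p q| := by
  have hd0 : ∀ q u, 0 ≤ d q u := fun q u => (hd q u).1
  have hA : cacheLoss p c d M ≤ cacheLoss p clow d M +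
      ∑ q ∈ Finset.univ.filter (fun q => ∀ u ∈ M, clow q ≤ d q u), p q * (c q - clow q) := by
    rw [cacheLoss_eq, cacheLoss_eq, Finset.sum_filter, ← Finset.sum_add_distrib]
    refine Finset.sum_le_sum fun q _ => ?_
    split_ifs with h
    · rw [qCost_hit clow d M q h]
      have := mul_le_mul_of_nonneg_left (qCost_le c d M q) (hp q).1
      linarith
    · have := mul_le_mul_of_nonneg_left (qCost_miss clow c d M q h) (hp q).1
      linarith
  have hB := loss_shift p phat clow d M hclow hd0
  have hC := loss_shift phat p clow d Mstar hclow hd0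
  have hsymm : ∑ q : Q, |p q - phat q| = ∑ q : Q, |phat q - p q| :=
    Finset.sum_congr rfl fun q _ => abs_sub_comm _ _
  rw [hsymm] at hC
  have hD : cacheLoss p clow d Mstar ≤ cacheLoss p c d Mstar := by
    rw [cacheLoss_eq, cacheLoss_eq]
    exact Finset.sum_le_sum fun q _ =>
      mul_le_mul_of_nonneg_left (qCost_mono clow c d Mstar q (hle q)) (hp q).1
  have hE := hM_approx Mstar hMstar_card
  have hF := mul_le_mul_of_nonneg_left (hC.trans (add_le_add_left hD _))
    (by linarith : (0 : ℝ) ≤ α)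
  linarith
end
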